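/- arXiv:2406.12811 — 2 statements merged into one kernel-verified Lean document; each statement's English description precedes it below -/
import Mathlib

section
/- Every finitary finite-matching-extendable matroid whose ground set is countable is matchable; that is, if M is a finitary f.m.e. matroid with countable ground set, then the ground set of M can be partitioned into circuits of M. -/
open Set Function

variable {α : Type*}

/-- A circuit of a matroid `M`: a minimal dependent set. -/
def Matroid.IsCircuit' (M : Matroid α) (C : Set α) : Prop := Minimal M.Dep C

/-- The deletion `M ＼ F`: the restriction of `M` to the complement of `F`;
its circuits are exactly the circuits of `M` disjoint from `F`. -/
def Matroid.del (M : Matroid α) (F : Set α) : Matroid α := M.restrict (M.E \ F)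

/-- A matching in `M`: a set of pairwise disjoint circuits of `M`. -/
def Matroid.IsMatching (M : Matroid α) (𝒜 : Set (Set α)) : Prop :=
  (∀ C ∈ 𝒜, M.IsCircuit' C) ∧ 𝒜.Pairwise Disjoint

/-- `M` is matchable if its ground set can be partitioned into circuits of `M`. -/
def Matroid.Matchable (M : Matroid α) : Prop :=
  ∃ 𝒜 : Set (Set α), M.IsMatching 𝒜 ∧ ⋃₀ 𝒜 = M.E

/-- `M` is finite matching extendable (f.m.e.): for every finite matching `𝒜` and every
ground-set element `e ∉ ⋃₀ 𝒜` there is a circuit through `e` disjoint from `⋃₀ 𝒜`. -/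
def Matroid.FME (M : Matroid α) : Prop :=
  ∀ 𝒜 : Set (Set α), 𝒜.Finite → M.IsMatching 𝒜 → ∀ e ∈ M.E \ ⋃₀ 𝒜,
    ∃ C, M.IsCircuit' C ∧ e ∈ C ∧ C ∩ ⋃₀ 𝒜 = ∅

theorem fme_step (M : Matroid α) (hfme : M.FME) (𝒜 : Set (Set α)) (hf : 𝒜.Finite)
    (hm : M.IsMatching 𝒜) (e : α) (he : e ∈ M.E) :
    ∃ ℬ : Set (Set α), ℬ.Finite ∧ M.IsMatching ℬ ∧ 𝒜 ⊆ ℬ ∧ e ∈ ⋃₀ ℬ := by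
  by_cases h : e ∈ ⋃₀ 𝒜
  · exact ⟨𝒜, hf, hm, Subset.rfl, h⟩
  · obtain ⟨C, hC, heC, hd⟩ := hfme 𝒜 hf hm e ⟨he, h⟩
    refine ⟨insert C 𝒜, hf.insert C, ⟨?_, ?_⟩, subset_insert _ _, C, mem_insert _ _, heC⟩
    · rintro D (rfl | hD)
      · exact hC
      · exact hm.1 D hD
    · refine hm.2.insert ?_
      intro D hD _
      rw [disjoint_comm (a := D), and_self]
      exact (disjoint_iff_inter_eq_empty.2 hd).mono_right (subset_sUnion_of_mem hD)

/-- Every finitary finite-matching-extendable matroid with countable ground set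
is matchable. -/
theorem fme_countable_matchable (M : Matroid α) [M.Finitary] (hcount : M.E.Countable)
    (hfme : M.FME) : M.Matchable := by
  classical
  rcases M.E.eq_empty_or_nonempty with hE | hE
  · exact ⟨∅, ⟨by simp, by simp⟩, by simp [hE]⟩
  obtain ⟨f, hf⟩ := hcount.exists_eq_range hE
  have hfE : ∀ n, f n ∈ M.E := fun n => hf ▸ mem_range_self n
  choose g hg using fun (A : {𝒜 : Set (Set α) // 𝒜.Finite ∧ M.IsMatching 𝒜}) (n : ℕ) =>
    fme_step M hfme A.1 A.2.1 A.2.2 (f n) (hfE n)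
  let s : ℕ → {𝒜 : Set (Set α) // 𝒜.Finite ∧ M.IsMatching 𝒜} := fun n =>
    Nat.rec ⟨∅, finite_empty, by simp, by simp⟩
      (fun n A => ⟨g A n, (hg A n).1, (hg A n).2.1⟩) n
  have hmono : Monotone (fun n => (s n).1) :=
    monotone_nat_of_le_succ fun n => (hg (s n) n).2.2.1
  refine ⟨⋃ n, (s n).1, ⟨?_, ?_⟩, ?_⟩
  · intro C hC
    obtain ⟨n, hn⟩ := mem_iUnion.1 hC
    exact (s n).2.2.1 C hn
  · intro C hC D hD hne
    obtain ⟨n, hn⟩ := mem_iUnion.1 hC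
    obtain ⟨m, hm⟩ := mem_iUnion.1 hD
    exact (s (max n m)).2.2.2 (hmono (le_max_left n m) hn) (hmono (le_max_right n m) hm) hne
  · apply Subset.antisymm
    · apply sUnion_subset
      intro C hC
      obtain ⟨n, hn⟩ := mem_iUnion.1 hC
      exact ((s n).2.2.1 C hn).prop.subset_ground
    · intro e he
      rw [hf] at he
      obtain ⟨n, rfl⟩ := he
      obtain ⟨C, hC, heC⟩ := (hg (s n) n).2.2.2
      exact ⟨C, mem_iUnion.2 ⟨n + 1, hC⟩, heC⟩
end

section
/- Let M be the matroid on ground set ℤ whose circuits are exactly the 3-element subsets of ℤ (the rank-2 uniform matroid on ℤ). Let O consist, for each triple i < j < k of integers, of the signed set on {i, j, k} assigning +1 to i and k and −1 to j, together with its negative, and nothing else; let O* consist, for each n ∈ ℤ, of the signed set on ℤ ∖ {n} assigning +1 to every m < n and −1 to every m > n, together with its negative, and nothing else. Then: (i) the cocircuits of M are exactly the sets ℤ ∖ {n} for n ∈ ℤ; (ii) O and O* satisfy the orthogonality axiom, so (M, O, O*) is a finitary oriented matroid; and (iii) no member of O is positive and no member of O* is positive. In particular, there exists a finitary oriented matroid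 with neither a positive circuit nor a positive cocircuit, so the Farkas lemma fails for general finitary oriented matroids. -/
open Set Function

variable {α : Type*}

/-- A circuit of a matroid `M`: a minimal dependent set. A cocircuit of `M` is a
circuit of the dual matroid `M✶`. -/
def Matroid.IsCircuitOrig (M : Matroid α) (C : Set α) : Prop := Minimal M.Dep C

/-- A signed set, encoded as an integer-valued function taking values `1` or `-1` on its
support (which plays the role of the domain of the signed set) and `0` elsewhere. -/
def IsSignedSet (g : α → ℤ) : Prop := ∀ e ∈ Function.support g, g e = 1 ∨ g e = -1

/-- A signed set is positive if it is constantly `+1` on its domain. -/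
def IsPositive (g : α → ℤ) : Prop := ∀ e ∈ Function.support g, g e = 1

/-- `O` is a signature of the set-system `𝒞`: it consists of exactly two signings of each
member of `𝒞`, these two being negatives of each other, and nothing else. -/
structure IsSignature (𝒞 : Set (Set α)) (O : Set (α → ℤ)) : Prop where
  signed : ∀ g ∈ O, IsSignedSet g
  dom_mem : ∀ g ∈ O, Function.support g ∈ 𝒞
  exists_signing : ∀ C ∈ 𝒞, ∃ g ∈ O, Function.support g = C
  neg_mem : ∀ g ∈ O, -g ∈ O
  eq_or_eq_neg : ∀ g ∈ O, ∀ h ∈ O, Function.support g = Function.support h → h = g ∨ h = -g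

/-- `(M, O, Ostar)` is an oriented matroid: `O` is a signature of the circuits of `M`,
`Ostar` is a signature of the cocircuits of `M`, and orthogonality holds: whenever the
domains of `C ∈ O` and `D ∈ Ostar` intersect, the restriction of `C` to the (finite)
intersection is neither equal to, nor the negative of, the restriction of `D`. -/
structure IsOrientation (M : Matroid α) (O Ostar : Set (α → ℤ)) : Prop where
  circuit_signature : IsSignature {C | M.IsCircuitOrig C} O
  cocircuit_signature : IsSignature {D | M✶.IsCircuitOrig D} Ostar
  orthogonality : ∀ C ∈ O, ∀ D ∈ Ostar,
    (Function.support C ∩ Function.support D).Nonempty →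
      (¬ ∀ e ∈ Function.support C ∩ Function.support D, C e = D e) ∧
      (¬ ∀ e ∈ Function.support C ∩ Function.support D, C e = - D e)

/-- The oriented matroid is binary: `∑_{e ∈ dom C ∩ dom D} C(e)·D(e) = 0` for every
signed circuit `C ∈ O` and signed cocircuit `D ∈ Ostar` (a finite sum, since circuits
of a finitary matroid are finite). -/
def IsBinaryOrientation (O Ostar : Set (α → ℤ)) : Prop :=
  ∀ C ∈ O, ∀ D ∈ Ostar, ∑ᶠ e, C e * D e = 0

/-- The oriented matroid is balanced: in every signed cocircuit, the set of positive
elements and the set of negative elements have the same cardinality. -/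
def IsBalanced (Ostar : Set (α → ℤ)) : Prop :=
  ∀ D ∈ Ostar, Cardinal.mk {e : α | D e = 1} = Cardinal.mk {e : α | D e = -1}

/-- The signed set on `{i, j, k}` (for `i < j < k`) assigning `+1` to `i` and `k`
and `-1` to `j`. -/
def tripleSign (i j k : ℤ) : ℤ → ℤ :=
  fun m => if m = i then 1 else if m = j then -1 else if m = k then 1 else 0

/-- The signed set on `ℤ \ {n}` assigning `+1` to every `m < n` and `-1` to
every `m > n`. -/
def cutSign (n : ℤ) : ℤ → ℤ :=
  fun m => if m < n then 1 else if n < m then -1 else 0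

lemma supp_triple {i j k : ℤ} :
    Function.support (tripleSign i j k) = {i, j, k} := by
  ext m
  simp only [Function.mem_support, tripleSign, Set.mem_insert_iff, Set.mem_singleton_iff]
  grind

lemma supp_cut (n : ℤ) : Function.support (cutSign n) = Set.univ \ {n} := by
  ext m
  simp only [Function.mem_support, cutSign, Set.mem_sdiff, Set.mem_univ, Set.mem_singleton_iff,
    true_and]
  grind

lemma three_iff (C : Set ℤ) : (C.Finite ∧ C.ncard = 3) ↔
    ∃ i j k : ℤ, i < j ∧ j < k ∧ C = {i, j, k} := by
  constructor
  · rintro ⟨-, h⟩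
    obtain ⟨x, y, z, hxy, hxz, hyz, rfl⟩ := Set.ncard_eq_three.1 h
    have key : ∀ i j k : ℤ, i < j → j < k → (∀ m, (m = x ∨ m = y ∨ m = z) ↔
        (m = i ∨ m = j ∨ m = k)) → ∃ i j k : ℤ, i < j ∧ j < k ∧
        ({x, y, z} : Set ℤ) = {i, j, k} := by
      intro i j k h1 h2 h3
      refine ⟨i, j, k, h1, h2, ?_⟩
      ext m
      simpa using h3 m
    rcases lt_or_gt_of_ne hxy with h1 | h1 <;> rcases lt_or_gt_of_ne hxz with h2 | h2 <;>
      rcases lt_or_gt_of_ne hyz with h3 | h3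
    · exact key x y z h1 h3 (by grind)
    · exact key x z y h2 h3 (by grind)
    · omega
    · exact key z x y h2 h1 (by grind)
    · exact key y x z h1 h2 (by grind)
    · omega
    · exact key y z x h3 h2 (by grind)
    · exact key z y x h3 h1 (by grind)
  · rintro ⟨i, j, k, h1, h2, rfl⟩
    refine ⟨by simp, Set.ncard_eq_three.2 ⟨i, j, k, ?_, ?_, ?_, rfl⟩⟩ <;> omega

lemma triple_inj {i j k i' j' k' : ℤ} (h1 : i < j) (h2 : j < k) (h1' : i' < j') (h2' : j' < k')
    (h : ({i, j, k} : Set ℤ) = {i', j', k'}) : i = i' ∧ j = j' ∧ k = k' := by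
  have h3 : ∀ m, (m = i ∨ m = j ∨ m = k) ↔ (m = i' ∨ m = j' ∨ m = k') := by
    intro m
    simpa using Set.ext_iff.1 h m
  have a := (h3 i).1 (by simp)
  have b := (h3 j).1 (by simp)
  have c := (h3 k).1 (by simp)
  omega

lemma indep_iff3 (M : Matroid ℤ) (hE : M.E = Set.univ)
    (hcirc : ∀ C : Set ℤ, M.IsCircuitOrig C ↔ C.Finite ∧ C.ncard = 3) (I : Set ℤ) :
    M.Indep I ↔ ∀ a ∈ I, ∀ b ∈ I, ∀ c ∈ I, a = b ∨ a = c ∨ b = c := by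
  rw [Matroid.indep_iff_forall_subset_not_isCircuit (by simp [hE])]
  constructor
  · intro h a ha b hb c hc
    by_contra! hne
    refine h {a, b, c} ?_ ((hcirc _).2 ⟨by simp, Set.ncard_eq_three.2
      ⟨a, b, c, hne.1, hne.2.1, hne.2.2, rfl⟩⟩)
    rintro m (rfl | rfl | rfl) <;> assumption
  · intro h C hC hCc
    obtain ⟨i, j, k, h1, h2, rfl⟩ := (three_iff C).1 ((hcirc C).1 hCc)
    have := h i (hC (by simp)) j (hC (by simp)) k (hC (by simp))
    omega

lemma meets_iff (M : Matroid ℤ) (hE : M.E = Set.univ)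
    (hcirc : ∀ C : Set ℤ, M.IsCircuitOrig C ↔ C.Finite ∧ C.ncard = 3) (X : Set ℤ) :
    (∀ B, M.IsBase B → (X ∩ B).Nonempty) ↔ ∀ a b, a ∉ X → b ∉ X → a = b := by
  have hind := indep_iff3 M hE hcirc
  have hpair : ∀ a b : ℤ, M.Indep {a, b} := by
    intro a b
    rw [hind]
    simp only [Set.mem_insert_iff, Set.mem_singleton_iff]
    grind
  constructor
  · intro h a b ha hb
    by_contra hab
    have hB : M.IsBase {a, b} := by
      rw [Matroid.isBase_iff_maximal_indep]
      refine ⟨hpair a b, fun J hJ hs c hc => ?_⟩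
      have := (hind J).1 hJ a (hs (by simp)) b (hs (by simp)) c hc
      simp only [Set.mem_insert_iff, Set.mem_singleton_iff]
      grind
    obtain ⟨m, hm, rfl | rfl⟩ := h _ hB
    · exact ha hm
    · exact hb hm
  · intro h B hB
    by_contra hne
    have hd : ∀ m ∈ B, m ∉ X := fun m hm hx => hne ⟨m, hx, hm⟩
    have hex : ∃ a, B ⊆ {a} := by
      rcases B.eq_empty_or_nonempty with rfl | ⟨a, ha⟩
      · exact ⟨0, by simp⟩
      · exact ⟨a, fun m hm => h m a (hd m hm) (hd a ha)⟩
    obtain ⟨a, hBa⟩ := hex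
    have hEq := hB.eq_of_subset_indep (hpair a (a + 1))
      (hBa.trans (by simp))
    have : a + 1 ∈ B := by rw [hEq]; simp
    have := hBa this
    simp at this

lemma cocirc_iff (M : Matroid ℤ) (hE : M.E = Set.univ)
    (hcirc : ∀ C : Set ℤ, M.IsCircuitOrig C ↔ C.Finite ∧ C.ncard = 3) (D : Set ℤ) :
    M✶.IsCircuitOrig D ↔ ∃ n : ℤ, D = Set.univ \ {n} := by
  have h0 : M✶.IsCircuitOrig D ↔ Minimal (fun X : Set ℤ => ∀ a b, a ∉ X → b ∉ X → a = b) D := by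
    have h1 : M✶.IsCircuitOrig D ↔ M.IsCocircuit D := Iff.rfl
    rw [h1, Matroid.isCocircuit_iff_minimal]
    simp_rw [meets_iff M hE hcirc]
  rw [h0]
  constructor
  · rintro ⟨h1, h2⟩
    by_cases hn : ∃ n, n ∉ D
    · obtain ⟨n, hn⟩ := hn
      refine ⟨n, ?_⟩
      ext m
      simp only [Set.mem_sdiff, Set.mem_univ, Set.mem_singleton_iff, true_and]
      constructor
      · rintro hm rfl
        exact hn hm
      · intro hm
        by_contra hmD
        exact hm (h1 m n hmD hn)
    · push Not at hn
      have := h2 (y := Set.univ \ {0}) (by simp) (fun m _ => hn m) (hn 0)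
      simp at this
  · rintro ⟨n, rfl⟩
    refine ⟨by simp, fun Y hY hs m hm => ?_⟩
    by_contra hmY
    have := hY m n hmY (fun h => (hs h).2 rfl)
    exact hm.2 this

/-- Kaspar's example: for the rank-2 uniform matroid `M` on `ℤ` (whose circuits are
exactly the 3-element subsets of `ℤ`), with `O` consisting of the signed sets
`tripleSign i j k` (`i < j < k`) and their negatives and `Ostar` consisting of the
signed sets `cutSign n` (`n ∈ ℤ`) and their negatives:
(i) the cocircuits of `M` are exactly the sets `ℤ \ {n}`;
(ii) `(M, O, Ostar)` is a finitary oriented matroid (in particular orthogonality holds);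
(iii) no member of `O` and no member of `Ostar` is positive.
In particular, there is a finitary oriented matroid with neither a positive signed
circuit nor a positive signed cocircuit, so the Farkas lemma fails in general. -/
theorem kaspar_example (M : Matroid ℤ) (hE : M.E = Set.univ)
    (hcirc : ∀ C : Set ℤ, M.IsCircuitOrig C ↔ C.Finite ∧ C.ncard = 3)
    (O Ostar : Set (ℤ → ℤ))
    (hO : O = {g | ∃ i j k : ℤ, i < j ∧ j < k ∧
      (g = tripleSign i j k ∨ g = -tripleSign i j k)})
    (hOstar : Ostar = {g | ∃ n : ℤ, g = cutSign n ∨ g = -cutSign n}) :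
    (∀ D : Set ℤ, M✶.IsCircuitOrig D ↔ ∃ n : ℤ, D = Set.univ \ {n}) ∧
    (M.Finitary ∧ IsOrientation M O Ostar) ∧
    ((∀ g ∈ O, ¬ IsPositive g) ∧ (∀ g ∈ Ostar, ¬ IsPositive g)) ∧
    ∃ (β : Type) (M' : Matroid β) (O' Ostar' : Set (β → ℤ)),
      M'.Finitary ∧ IsOrientation M' O' Ostar' ∧
      (∀ g ∈ O', ¬ IsPositive g) ∧ (∀ g ∈ Ostar', ¬ IsPositive g) := by
  have hco := cocirc_iff M hE hcirc
  have hfin : M.Finitary :=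
    Matroid.finitary_iff_forall_isCircuit_finite.2 fun C hC => ((hcirc C).1 hC).1
  have hor : IsOrientation M O Ostar := by
    subst hO hOstar
    refine ⟨⟨?_, ?_, ?_, ?_, ?_⟩, ⟨?_, ?_, ?_, ?_, ?_⟩, ?_⟩
    · rintro g ⟨i, j, k, h1, h2, rfl | rfl⟩ e he <;>
        simp only [Function.mem_support, Pi.neg_apply, tripleSign] at he ⊢ <;> grind
    · rintro g ⟨i, j, k, h1, h2, rfl | rfl⟩ <;>
        simp only [Function.support_neg, supp_triple, Set.mem_ofPred_eq, hcirc, three_iff] <;>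
        exact ⟨i, j, k, h1, h2, rfl⟩
    · intro C hC
      obtain ⟨i, j, k, h1, h2, rfl⟩ := (three_iff C).1 ((hcirc C).1 hC)
      exact ⟨_, ⟨i, j, k, h1, h2, Or.inl rfl⟩, supp_triple⟩
    · rintro g ⟨i, j, k, h1, h2, rfl | rfl⟩
      · exact ⟨i, j, k, h1, h2, Or.inr rfl⟩
      · exact ⟨i, j, k, h1, h2, Or.inl (neg_neg _)⟩
    · rintro g ⟨i, j, k, h1, h2, hg⟩ h ⟨i', j', k', h1', h2', hh⟩ hs
      have hs' : ({i, j, k} : Set ℤ) = {i', j', k'} := by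
        rcases hg with rfl | rfl <;> rcases hh with rfl | rfl <;>
          simpa only [Function.support_neg, supp_triple] using hs
      obtain ⟨rfl, rfl, rfl⟩ := triple_inj h1 h2 h1' h2' hs'
      rcases hg with rfl | rfl <;> rcases hh with rfl | rfl <;> simp
    · rintro g ⟨n, rfl | rfl⟩ e he <;>
        simp only [Function.mem_support, Pi.neg_apply, cutSign] at he ⊢ <;> grind
    · rintro g ⟨n, rfl | rfl⟩ <;>
        simp only [Function.support_neg, supp_cut, Set.mem_ofPred_eq, hco] <;>
        exact ⟨n, rfl⟩
    · intro C hC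
      obtain ⟨n, rfl⟩ := (hco C).1 hC
      exact ⟨_, ⟨n, Or.inl rfl⟩, supp_cut n⟩
    · rintro g ⟨n, rfl | rfl⟩
      · exact ⟨n, Or.inr rfl⟩
      · exact ⟨n, Or.inl (neg_neg _)⟩
    · rintro g ⟨n, hg⟩ h ⟨n', hh⟩ hs
      have hs' : (Set.univ \ {n} : Set ℤ) = Set.univ \ {n'} := by
        rcases hg with rfl | rfl <;> rcases hh with rfl | rfl <;>
          simpa only [Function.support_neg, supp_cut] using hs
      have : n = n' := by
        have := Set.ext_iff.1 hs' n
        simpa using this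
      subst this
      rcases hg with rfl | rfl <;> rcases hh with rfl | rfl <;> simp
    · rintro C ⟨i, j, k, h1, h2, hC⟩ D ⟨n, hD⟩ -
      have hCs : Function.support C = {i, j, k} := by
        rcases hC with rfl | rfl <;> simp only [Function.support_neg, supp_triple]
      have hDs : Function.support D = Set.univ \ {n} := by
        rcases hD with rfl | rfl <;> simp only [Function.support_neg, supp_cut]
      rw [hCs, hDs]
      constructor <;> intro h <;>
      · have a := h i
        have b := h j
        have c := h k
        clear h hCs hDs
        simp only [Set.mem_inter_iff, Set.mem_insert_iff, Set.mem_singleton_iff, Set.mem_sdiff,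
          Set.mem_univ, true_and, true_or, or_true] at a b c
        rcases hC with rfl | rfl <;> rcases hD with rfl | rfl <;>
          simp only [tripleSign, cutSign, Pi.neg_apply] at a b c <;> grind
  have hp : ∀ g ∈ O, ¬ IsPositive g := by
    subst hO
    rintro g ⟨i, j, k, h1, h2, rfl | rfl⟩ h
    · have := h j
      simp only [Function.mem_support, tripleSign] at this
      grind
    · have := h i
      simp only [Function.mem_support, tripleSign, Pi.neg_apply] at this
      grind
  have hp' : ∀ g ∈ Ostar, ¬ IsPositive g := by
    subst hOstar
    rintro g ⟨n, rfl | rfl⟩ h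
    · have := h (n + 1)
      simp only [Function.mem_support, cutSign] at this
      grind
    · have := h (n - 1)
      simp only [Function.mem_support, cutSign, Pi.neg_apply] at this
      grind
  exact ⟨hco, ⟨hfin, hor⟩, ⟨hp, hp'⟩, ℤ, M, O, Ostar, hfin, hor, hp, hp'⟩
end
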